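/- arXiv:1801.03975 — 3 statements merged into one kernel-verified Lean document; each statement's English description precedes it below -/
import Mathlib

section
/- Let λ ∈ (0,1] and let N be a positive integer. Define μ(j) = (1 − (1−λ)^j)/N for integers 1 ≤ j ≤ N and μ(j) = (1−λ)^{j−N}·(1 − (1−λ)^N)/N for integers j ≥ N+1. Then ∑_{j=1}^∞ j·μ(j) = 1/λ + (N−1)/2. -/
lemma fin_sum (lam : ℝ) (hl0 : 0 < lam) (N : ℕ) :
    ∑ j ∈ Finset.range N, ((j + 1 : ℕ) : ℝ) * (1 - (1 - lam) ^ (j + 1)) =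
      (N : ℝ) * (N + 1) / 2 - (1 - lam) *
        (1 - (N + 1) * (1 - lam) ^ N + N * (1 - lam) ^ (N + 1)) / lam ^ 2 := by
  induction N with
  | zero => simp
  | succ n ih =>
    rw [Finset.sum_range_succ, ih]
    push_cast
    field_simp
    ring

/-- The mean of the stationary AoI distribution under RR-ONE is
1/λ + (N−1)/2. -/
theorem stmt_2 (lam : ℝ) (hl0 : 0 < lam) (hl1 : lam ≤ 1) (N : ℕ) (hN : 0 < N)
    (μ : ℕ → ℝ)
    (hμ1 : ∀ j, 1 ≤ j → j ≤ N → μ j = (1 - (1 - lam) ^ j) / N)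
    (hμ2 : ∀ j, N + 1 ≤ j → μ j = (1 - lam) ^ (j - N) * (1 - (1 - lam) ^ N) / N) :
    HasSum (fun j : ℕ => ((j + 1 : ℕ) : ℝ) * μ (j + 1)) (1 / lam + ((N : ℝ) - 1) / 2) := by
  have hNR : (N : ℝ) ≠ 0 := by positivity
  have hq : ‖(1 - lam)‖ < 1 := by
    rw [Real.norm_eq_abs, abs_lt]; constructor <;> linarith
  have h1 := hasSum_coe_mul_geometric_of_norm_lt_one hq
  have h2 := hasSum_geometric_of_norm_lt_one hq
  have h3 := (h1.add (h2.mul_left ((N : ℝ) + 1))).mul_left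
    ((1 - lam) * (1 - (1 - lam) ^ N) / N)
  have hfin : ∑ j ∈ Finset.range N, ((j + 1 : ℕ) : ℝ) * μ (j + 1) =
      ((N : ℝ) * (N + 1) / 2 - (1 - lam) *
        (1 - (N + 1) * (1 - lam) ^ N + N * (1 - lam) ^ (N + 1)) / lam ^ 2) / N := by
    rw [← fin_sum lam hl0 N, Finset.sum_div]
    refine Finset.sum_congr rfl fun j hj => ?_
    have := Finset.mem_range.mp hj
    rw [hμ1 (j + 1) (by omega) (by omega), mul_div_assoc]
  rw [← hasSum_nat_add_iff' N, hfin]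
  convert h3 using 1
  · rfl
  · funext k
    rw [hμ2 (k + N + 1) (by omega), show k + N + 1 - N = k + 1 by omega]
    push_cast
    ring
  · rw [sub_sub_cancel]
    field_simp
    ring
end

section
/- Let λ ∈ (0,1] and let N be a positive integer. Consider the Markov transition kernel P on the positive integers defined by P(s, s') = λ·(1−λ)^{s'−1} for 1 ≤ s' ≤ N, P(s, s+N) = (1−λ)^N, and P(s, s') = 0 otherwise. Then P is a stochastic kernel (each row sums to 1), and any probability distribution μ on the positive integers satisfying μ(j) = ∑_{i=1}^∞ μ(i)·P(i,j) for all j ≥ 1 must equal μ(j) = λ·(1−λ)^{j−1} for all j ≥ 1. -/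
/-- The embedded Markov kernel of the AoI at scheduled slots under
RR-ONE, P(s,s') = λ(1−λ)^{s'−1} for 1 ≤ s' ≤ N, P(s,s+N) = (1−λ)^N and 0 otherwise,
is stochastic and its unique stationary probability distribution is geometric(λ). -/
theorem stmt_6 (lam : ℝ) (hl0 : 0 < lam) (hl1 : lam ≤ 1) (N : ℕ) (hN : 0 < N)
    (P : ℕ → ℕ → ℝ)
    (hP1 : ∀ s s', 1 ≤ s → 1 ≤ s' → s' ≤ N → P s s' = lam * (1 - lam) ^ (s' - 1))
    (hP2 : ∀ s, 1 ≤ s → P s (s + N) = (1 - lam) ^ N)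
    (hP0 : ∀ s s', 1 ≤ s → 1 ≤ s' → ¬ s' ≤ N → s' ≠ s + N → P s s' = 0) :
    (∀ s, 1 ≤ s → HasSum (fun j : ℕ => P s (j + 1)) 1) ∧
    (∀ μ : ℕ → ℝ, (∀ j, 1 ≤ j → 0 ≤ μ j) → HasSum (fun j : ℕ => μ (j + 1)) 1 →
      (∀ j, 1 ≤ j → μ j = ∑' i : ℕ, μ (i + 1) * P (i + 1) j) →
      ∀ j, 1 ≤ j → μ j = lam * (1 - lam) ^ (j - 1)) := by
  refine ⟨?_, ?_⟩
  · intro s hs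
    have h1 : HasSum (fun j : ℕ => if j < N then lam * (1 - lam) ^ j else 0)
        (∑ j ∈ Finset.range N, if j < N then lam * (1 - lam) ^ j else 0) := by
      apply hasSum_sum_of_ne_finset_zero
      intro b hb
      rw [if_neg]
      simpa using hb
    have h2 : HasSum (fun j : ℕ => if j = s - 1 + N then (1 - lam) ^ N else 0)
        ((1 - lam) ^ N) := hasSum_ite_eq _ _
    have h3 : (∑ j ∈ Finset.range N, if j < N then lam * (1 - lam) ^ j else 0)
        = 1 - (1 - lam) ^ N := by
      rw [Finset.sum_congr rfl (g := fun j => lam * (1 - lam) ^ j)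
        (fun j hj => if_pos (Finset.mem_range.mp hj)), ← Finset.mul_sum]
      have := mul_neg_geom_sum (1 - lam) N
      rw [← this]
      ring
    have h4 := h1.add h2
    rw [h3, sub_add_cancel] at h4
    convert h4 using 2 with j
    by_cases hj : j < N
    · rw [hP1 s (j + 1) hs (by omega) (by omega), if_pos hj, if_neg (by omega)]
      simp
    · by_cases hj2 : j = s - 1 + N
      · rw [if_neg hj, if_pos hj2, show j + 1 = s + N by omega, hP2 s hs, zero_add]
      · rw [if_neg hj, if_neg hj2, hP0 s (j + 1) hs (by omega) (by omega) (by omega), zero_add]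
  · intro μ _ hsum hst j
    induction j using Nat.strong_induction_on with
    | _ j ih =>
      intro hj
      rw [hst j hj]
      by_cases hjN : j ≤ N
      · have : ∀ i : ℕ, μ (i + 1) * P (i + 1) j = μ (i + 1) * (lam * (1 - lam) ^ (j - 1)) :=
          fun i => by rw [hP1 (i + 1) j (by omega) hj hjN]
        simp_rw [this]
        rw [tsum_mul_right, hsum.tsum_eq, one_mul]
      · obtain ⟨k, rfl⟩ : ∃ k, j = (k + 1) + N := ⟨j - N - 1, by omega⟩
        rw [tsum_eq_single k, hP2 (k + 1) (by omega), ih (k + 1) (by omega) (by omega), mul_assoc,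
          ← pow_add]
        · congr 2
          omega
        · intro i hi
          rw [hP0 (i + 1) _ (by omega) (by omega) hjN (by omega), mul_zero]
end

section
/- Let g₁, g₂, h₁, h₂ be positive reals satisfying g₂/2 < g₁ < g₂ and h₂ − g₂ > h₁. Then there exists δ₀ ∈ (0,1) such that for every δ ∈ (0, δ₀): g₂ + δ·(g₁ − g₂) + δ²·(h₁ + 1 − g₁) < 2·g₁ − δ·(h₂ + 1 − g₂). -/
/-- Counterexample core (Appendix A): if g₂/2 < g₁ < g₂ and
h₂ − g₂ > h₁ (all positive), then for all sufficiently small δ > 0,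
g₂ + δ(g₁ − g₂) + δ²(h₁ + 1 − g₁) < 2g₁ − δ(h₂ + 1 − g₂). -/
theorem stmt_14 (g₁ g₂ h₁ h₂ : ℝ) (hg₁ : 0 < g₁) (hg₂ : 0 < g₂) (hh₁ : 0 < h₁)
    (hh₂ : 0 < h₂) (h1 : g₂ / 2 < g₁) (h2 : g₁ < g₂) (h3 : h₁ < h₂ - g₂) :
    ∃ δ₀ : ℝ, δ₀ ∈ Set.Ioo (0 : ℝ) 1 ∧
      ∀ δ : ℝ, 0 < δ → δ < δ₀ →
        g₂ + δ * (g₁ - g₂) + δ ^ 2 * (h₁ + 1 - g₁) < 2 * g₁ - δ * (h₂ + 1 - g₂) := by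
  have hc : 0 < 2 * g₁ - g₂ := by linarith
  have hS : 0 < h₁ + h₂ + 2 + (2 * g₁ - g₂) := by linarith
  refine ⟨(2 * g₁ - g₂) / (h₁ + h₂ + 2 + (2 * g₁ - g₂)), ⟨div_pos hc hS, ?_⟩, ?_⟩
  · rw [div_lt_one hS]
    linarith
  · intro δ hδ hlt
    have hδ1 : δ < 1 := by
      refine hlt.trans ?_
      rw [div_lt_one hS]
      linarith
    rw [lt_div_iff₀ hS] at hlt
    have e1 : 0 < δ * (2 * g₁ - g₂) := mul_pos hδ hc
    have e2 : 0 < δ * (g₂ - g₁) := mul_pos hδ (by linarith)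
    have e3 : 0 < δ * g₂ := mul_pos hδ hg₂
    have e4 : 0 < δ ^ 2 * g₁ := by positivity
    have e5 : 0 < δ * (1 - δ) * (h₁ + 1) :=
      mul_pos (mul_pos hδ (by linarith)) (by linarith)
    nlinarith
end
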